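/- arXiv:1706.07406 — 4 statements merged into one kernel-verified Lean document; each statement's English description precedes it below -/
import Mathlib

section
/- Let M > 1 be an integer and define f(y) = ln(y) - y/M for y > 0. Then for every positive integer N with N < M, f(M) - f(N) ≥ 1/(4M² - 2M). -/
/-- For an integer `M > 1` and `f(y) = ln y - y/M`, every positive integer `N < M`
satisfies `f(M) - f(N) ≥ 1/(4M² - 2M)`. -/
theorem allOrNothing_f_gap_below (M : ℕ) (hM : 1 < M) (N : ℕ) (hN : 0 < N) (hNM : N < M) :
    (Real.log M - (M : ℝ) / M) - (Real.log N - (N : ℝ) / M) ≥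
      1 / (4 * (M : ℝ) ^ 2 - 2 * M) := by
  have hM' : (1 : ℝ) < M := by exact_mod_cast hM
  have hN' : (0 : ℝ) < N := by exact_mod_cast hN
  have hNM' : (N : ℝ) + 1 ≤ M := by exact_mod_cast hNM
  have hM0 : (0 : ℝ) < M := by linarith
  obtain ⟨d, hd⟩ : ∃ d : ℝ, d = 1 - (N : ℝ) / M := ⟨_, rfl⟩
  have hx : 0 < (N : ℝ) / M := by positivity
  have hd1 : 1 / (M : ℝ) ≤ d := by
    have h : (N : ℝ) / M + 1 / M ≤ 1 := by
      rw [← add_div, div_le_one hM0]; exact hNM'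
    linarith
  have hi : 0 < 1 / (M : ℝ) := by positivity
  have hd0 : 0 ≤ d := by linarith
  have habs : |d| < 1 := by rw [abs_of_nonneg hd0]; linarith
  have hs := Real.hasSum_pow_div_log_of_abs_lt_one habs
  have h2 := sum_le_hasSum (Finset.range 2) (fun i _ => by positivity) hs
  have h3 : (1 : ℝ) - d = N / M := by linarith
  rw [h3, Real.log_div hN'.ne' hM0.ne'] at h2
  norm_num [Finset.sum_range_succ] at h2
  have h4 : (1 / (M : ℝ)) ^ 2 ≤ d ^ 2 := by gcongr
  have h5 : 1 / (4 * (M : ℝ) ^ 2 - 2 * M) ≤ 1 / (2 * (M : ℝ) ^ 2) := by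
    apply one_div_le_one_div_of_le (by positivity)
    nlinarith
  have h6 : 1 / (2 * (M : ℝ) ^ 2) = (1 / (M : ℝ)) ^ 2 / 2 := by
    field_simp
  rw [div_self hM0.ne']
  linarith
end

section
/- Let M > 1 be an integer and define f(y) = ln(y) - y/M for y > 0. Then for every integer N with N > M, f(M) - f(N) ≥ 1/(4M² + 2M). -/
/-- For an integer `M > 1` and `f(y) = ln y - y/M`, every integer `N > M`
satisfies `f(M) - f(N) ≥ 1/(4M² + 2M)`. -/
theorem allOrNothing_f_gap_above (M : ℕ) (hM : 1 < M) (N : ℕ) (hNM : M < N) :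
    (Real.log M - (M : ℝ) / M) - (Real.log N - (N : ℝ) / M) ≥
      1 / (4 * (M : ℝ) ^ 2 + 2 * M) := by
  have hm : (0 : ℝ) < M := by exact_mod_cast (by omega : 0 < M)
  have hd : (M : ℝ) + 1 ≤ N := by exact_mod_cast hNM
  generalize (M : ℝ) = m at *
  generalize (N : ℝ) = n at *
  obtain ⟨d, rfl⟩ : ∃ d, n = m + d := ⟨n - m, by ring⟩
  have hd1 : 1 ≤ d := by linarith
  have hd0 : 0 < d := by linarith
  have h1 := Real.log_le_sub_one_of_pos (show 0 < (2 * m + d) / (2 * m) by positivity)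
  have h2 := Real.log_le_sub_one_of_pos (show 0 < 2 * (m + d) / (2 * m + d) by positivity)
  rw [Real.log_div (by positivity) (by positivity)] at h1 h2
  rw [Real.log_mul (by positivity) (by positivity)] at h1 h2
  have h3 : (m + d) / m - m / m - ((2 * m + d) / (2 * m) - 1) - (2 * (m + d) / (2 * m + d) - 1)
      = d ^ 2 / (2 * m * (2 * m + d)) := by
    field_simp
    ring
  have h4 : 1 / (4 * m ^ 2 + 2 * m) ≤ d ^ 2 / (2 * m * (2 * m + d)) := by
    rw [div_le_div_iff₀ (by positivity) (by positivity)]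
    have : 2 * m + d ≤ d ^ 2 * (2 * m + 1) := by
      nlinarith [mul_nonneg hm.le (show 0 ≤ d ^ 2 - 1 by nlinarith)]
    nlinarith [mul_le_mul_of_nonneg_left this hm.le]
  linarith
end

section
/- Let M > 1 be an integer and define f(y) = ln(y) - y/M for y > 0. Then for every positive integer N with N ≠ M, f(M) - f(N) ≥ 1/(5M²). -/
/-- For an integer `M > 1` and `f(y) = ln y - y/M`, every positive integer `N ≠ M`
satisfies `f(M) - f(N) ≥ 1/(5M²)`. -/
theorem allOrNothing_f_gap (M : ℕ) (hM : 1 < M) (N : ℕ) (hN : 0 < N) (hNM : N ≠ M) :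
    (Real.log M - (M : ℝ) / M) - (Real.log N - (N : ℝ) / M) ≥ 1 / (5 * (M : ℝ) ^ 2) := by
  have hM2 : (2 : ℝ) ≤ M := by exact_mod_cast hM
  have hM0 : (0 : ℝ) < M := by linarith
  have hN0 : (0 : ℝ) < N := by exact_mod_cast hN
  have hd : (1 : ℝ) ≤ ((N : ℝ) - M) ^ 2 := by
    have h : (N : ℤ) - M ≠ 0 := by omega
    have h2 : (0 : ℤ) < ((N : ℤ) - M) ^ 2 := by positivity
    have h3 : (1 : ℤ) ≤ ((N : ℤ) - M) ^ 2 := h2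
    exact_mod_cast h3
  obtain ⟨u, hu⟩ : ∃ u : ℝ, u = (N : ℝ) / M := ⟨_, rfl⟩
  have hu0 : 0 < u := by rw [hu]; positivity
  obtain ⟨s, hs⟩ : ∃ s : ℝ, s = Real.sqrt u := ⟨_, rfl⟩
  have hs0 : 0 < s := by rw [hs]; exact Real.sqrt_pos.mpr hu0
  have hsu : s ^ 2 = u := by rw [hs]; exact Real.sq_sqrt hu0.le
  have hlog : Real.log N - Real.log M = 2 * Real.log s := by
    rw [← Real.log_div hN0.ne' hM0.ne', ← hu, ← hsu, Real.log_pow]; norm_num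
  have hls := Real.log_le_sub_one_of_pos hs0
  obtain ⟨w, hw⟩ : ∃ w : ℝ, w = 1 / (M : ℝ) ^ 2 := ⟨_, rfl⟩
  have hw4 : w ≤ 1 / 4 := by
    rw [hw]; apply one_div_le_one_div_of_le <;> nlinarith
  have ht : w ≤ (u - 1) ^ 2 := by
    have : (u - 1) ^ 2 = ((N : ℝ) - M) ^ 2 / (M : ℝ) ^ 2 := by
      rw [hu]; field_simp
    rw [this, hw]; gcongr
  have key : w / 5 ≤ (s - 1) ^ 2 := by
    by_cases h : u ≤ 3 / 2
    · have h1 : s ≤ 1.23 := by nlinarith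
      have h2 : (s + 1) ^ 2 ≤ 5 := by nlinarith
      have h3 : (u - 1) ^ 2 = (s - 1) ^ 2 * (s + 1) ^ 2 := by rw [← hsu]; ring
      have h4 := mul_le_mul_of_nonneg_left h2 (sq_nonneg (s - 1))
      linarith
    · have h1 : 1.224 ≤ s := by nlinarith
      nlinarith
  have hw5 : 1 / (5 * (M : ℝ) ^ 2) = w / 5 := by rw [hw]; field_simp
  rw [hw5, div_self hM0.ne', ← hu]
  nlinarith
end

section
/- Let c_1, …, c_n and M be positive integers. Then there exists x ∈ {0,1}^n such that ∑_{i=1}^n c_i x_i = M if and only if the maximum of ln(∑_{i=1}^n c_i x_i) - (1/M)·∑_{i=1}^n c_i x_i over all x ∈ {0,1}^n with ∑_{i=1}^n c_i x_i > 0 equals ln(M) - 1. -/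
/-- Subset-sum criterion via the log-transformed objective: for positive integers
`c₁,…,cₙ` and `M`, some binary vector `x` has `∑ cᵢ xᵢ = M` iff the maximum of
`ln(∑ cᵢ xᵢ) - (1/M)·∑ cᵢ xᵢ` over binary `x` with positive sum equals `ln M - 1`. -/
theorem subsetSum_iff_logObjective_max (n : ℕ) (c : Fin n → ℕ) (hc : ∀ i, 0 < c i)
    (M : ℕ) (hM : 0 < M) :
    (∃ x : Fin n → Bool, (∑ i, if x i then c i else 0) = M) ↔
      IsGreatest
        {v : ℝ | ∃ x : Fin n → Bool,
          (0 < ∑ i, if x i then c i else 0) ∧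
          v = Real.log (∑ i, if x i then (c i : ℝ) else 0) -
                (1 / (M : ℝ)) * ∑ i, if x i then (c i : ℝ) else 0}
        (Real.log M - 1) := by
  have hM' : (0 : ℝ) < M := by exact_mod_cast hM
  have key : ∀ x : Fin n → Bool, (∑ i, if x i then (c i : ℝ) else 0) =
      ((∑ i, if x i then c i else 0 : ℕ) : ℝ) := by
    intro x
    push_cast
    rfl
  have hlog : ∀ S : ℕ, 0 < S →
      Real.log S - Real.log M = Real.log ((S : ℝ) / M) := by
    intro S hS
    have hS' : (S : ℝ) ≠ 0 := by positivity
    rw [Real.log_div hS' hM'.ne']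
  have hdiv : ∀ S : ℕ, (1 / (M : ℝ)) * S = (S : ℝ) / M := by
    intro S
    ring
  constructor
  · rintro ⟨x, hx⟩
    refine ⟨⟨x, by rw [hx]; exact hM, ?_⟩, ?_⟩
    · rw [key, hx, hdiv, div_self hM'.ne']
    · rintro v ⟨y, hy, rfl⟩
      rw [key, hdiv]
      have h1 := hlog _ hy
      have hpos : (0 : ℝ) < ((∑ i, if y i then c i else 0 : ℕ) : ℝ) := by
        exact_mod_cast hy
      have h2 := Real.log_le_sub_one_of_pos (div_pos hpos hM')
      linarith
  · rintro ⟨⟨x, hx, hv⟩, -⟩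
    refine ⟨x, ?_⟩
    rw [key, hdiv] at hv
    have h1 := hlog _ hx
    have hpos : (0 : ℝ) < ((∑ i, if x i then c i else 0 : ℕ) : ℝ) := by
      exact_mod_cast hx
    by_contra hne
    have hne' : ((∑ i, if x i then c i else 0 : ℕ) : ℝ) / M ≠ 1 := by
      rw [Ne, div_eq_one_iff_eq hM'.ne']
      exact fun h => hne (Nat.cast_injective h)
    have h2 := Real.log_lt_sub_one_of_pos (div_pos hpos hM') hne'
    linarith
end
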